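/- Let M be the 27 × 27 integer matrix obtained by stacking vertically the three Kronecker products r ⊗ I₃ ⊗ I₃, I₃ ⊗ r ⊗ I₃, and I₃ ⊗ I₃ ⊗ r, where I₃ is the 3 × 3 identity matrix and r = (1, 1, 1). Let x_p = (1,0,0,0,52,0,0,0,2,0,52,0,52,2652,106,0,106,0,0,0,2,0,106,0,2,0,0) ∈ ℤ²⁷. Then the set of vectors x ∈ ℤ²⁷ with all coordinates nonnegative satisfying M x = M x_p, x₂₇ = 0, and x₉ ≤ 2, x₁₈ ≤ 2, x₂₁ ≤ 2, x₂₄ ≤ 2, x₂₅ ≤ 2, x₂₆ ≤ 2 has exactly 122 elements. -/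

import Mathlib

/-!
Write `x` as a 3 × 3 × 3 array with line sums prescribed by `M x = M x_p`. The kernel of `M` is the
tensor cube of the space of zero-sum vectors in dimension 3, so it has rank 8; together with
`x₂₇ = 0` the equations leave seven free coordinates. Take them to be `x₁`, `x₃`, `x₇`, `x₁₉`,
`x₉`, `x₂₁`, `x₂₅`, and call them `e, u, v, w, a, b, c`. The lines through `(1,1,1)` have sum 1
and the other lines containing a free coordinate have sum 2, while the remaining line sums are at
least 52, so large that the entries with at least two indices equal to 2 are automatically
nonnegative. Hence the conditions become

* `e, u, v, w ≥ 0` and `e + u, e + v, e + w ≤ 1`;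
* `0 ≤ a, b, c ≤ 2` and `u + a, u + b, v + a, v + c, w + b, w + c ≤ 2`.

For `e = 1` this forces `u = v = w = 0` and gives 27 solutions. For `e = 0` the number of ones
among `u, v, w` may be 0, 1, 2 or 3, which contributes
`27 + 3 * 12 + 3 * 8 + 8 = 95`. The total is 122.

The lemma `M_mulVec` turns the matrix equation into line sums, `solution_set_eq` is the
parametrization, and `card_params` is the finite count.
-/

open Matrix Kronecker

/-- The 1 × 3 all-ones row vector `r = (1, 1, 1)`. -/
def rOnes : Matrix (Fin 1) (Fin 3) ℤ := Matrix.of fun _ _ => 1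

/-- Lexicographic identification of index triples `(i₁, i₂, i₃)` with `Fin 27`
(first coordinate most significant), matching the lexicographic ordering of the triples
`(i₁, i₂, i₃) ∈ {1, 2, 3}³` used to index the 27 coordinates. -/
def colEquiv : (Fin 3 × Fin 3) × Fin 3 ≃ Fin 27 :=
  (Equiv.prodCongr finProdFinEquiv (Equiv.refl (Fin 3))).trans finProdFinEquiv

def rowEquiv1 : (Fin 1 × Fin 3) × Fin 3 ≃ Fin 9 :=
  (Equiv.prodCongr finProdFinEquiv (Equiv.refl (Fin 3))).trans finProdFinEquiv

def rowEquiv2 : (Fin 3 × Fin 1) × Fin 3 ≃ Fin 9 :=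
  (Equiv.prodCongr finProdFinEquiv (Equiv.refl (Fin 3))).trans finProdFinEquiv

def rowEquiv3 : (Fin 3 × Fin 3) × Fin 1 ≃ Fin 9 :=
  (Equiv.prodCongr finProdFinEquiv (Equiv.refl (Fin 1))).trans finProdFinEquiv

/-- The 27 × 27 matrix obtained by stacking vertically the three Kronecker products
`r ⊗ I₃ ⊗ I₃`, `I₃ ⊗ r ⊗ I₃` and `I₃ ⊗ I₃ ⊗ r`, where `I₃` is the 3 × 3 identity matrix and
`r = (1, 1, 1)` is the 1 × 3 all-ones row, with columns indexed lexicographically by triples. -/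
def M : Matrix (Fin 27) (Fin 27) ℤ :=
  Matrix.reindex
    ((rowEquiv1.sumCongr (rowEquiv2.sumCongr rowEquiv3)).trans
      (((Equiv.refl (Fin 9)).sumCongr finSumFinEquiv).trans finSumFinEquiv))
    colEquiv
    (Matrix.fromRows
      (rOnes ⊗ₖ (1 : Matrix (Fin 3) (Fin 3) ℤ) ⊗ₖ (1 : Matrix (Fin 3) (Fin 3) ℤ))
      (Matrix.fromRows
        ((1 : Matrix (Fin 3) (Fin 3) ℤ) ⊗ₖ rOnes ⊗ₖ (1 : Matrix (Fin 3) (Fin 3) ℤ))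
        ((1 : Matrix (Fin 3) (Fin 3) ℤ) ⊗ₖ (1 : Matrix (Fin 3) (Fin 3) ℤ) ⊗ₖ rOnes)))

/-- The particular solution of block 222 (coordinates indexed lexicographically by triples,
coordinate 27 corresponding to (3,3,3)). -/
def xp : Fin 27 → ℤ := ![1,0,0,0,52,0,0,0,2,0,52,0,52,2652,106,0,106,0,0,0,2,0,106,0,2,0,0]

/-- The first of the three coordinates on the line of the array that row `i` of `M` sums over. -/
def lineStart (i : Fin 27) : Fin 27 :=
  if i.val < 9 then i
  else if i.val < 18 then Fin.ofNat 27 (9 * ((i.val - 9) / 3) + i.val % 3)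
  else Fin.ofNat 27 (3 * (i.val - 18))

/-- The index distance between consecutive coordinates on the line summed over by row `i` of `M`. -/
def lineStep (i : Fin 27) : Fin 27 :=
  if i.val < 9 then 9 else if i.val < 18 then 3 else 1

lemma M_apply (i j : Fin 27) :
    M i j = (if j = lineStart i then 1 else 0) + (if j = lineStart i + lineStep i then 1 else 0)
      + (if j = lineStart i + lineStep i + lineStep i then 1 else 0) := by
  have h : ∀ p : Fin 27 × Fin 27, M p.1 p.2 = (if p.2 = lineStart p.1 then 1 else 0)
      + (if p.2 = lineStart p.1 + lineStep p.1 then 1 else 0)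
      + (if p.2 = lineStart p.1 + lineStep p.1 + lineStep p.1 then 1 else 0) := by
    decide +kernel
  exact h (i, j)

lemma M_mulVec (x : Fin 27 → ℤ) (i : Fin 27) :
    M.mulVec x i = x (lineStart i) + x (lineStart i + lineStep i)
      + x (lineStart i + lineStep i + lineStep i) := by
  simp [Matrix.mulVec, dotProduct, M_apply, add_mul, Finset.sum_add_distrib]

/-- The equation `M x = M x_p`, written out as the 27 line sums. -/
lemma mulVec_eq_iff (x : Fin 27 → ℤ) :
    M.mulVec x = M.mulVec xp ↔
      (x 0 + x 9 + x 18 = 1 ∧ x 1 + x 10 + x 19 = 52 ∧ x 2 + x 11 + x 20 = 2 ∧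
      x 3 + x 12 + x 21 = 52 ∧ x 4 + x 13 + x 22 = 2810 ∧ x 5 + x 14 + x 23 = 106 ∧
      x 6 + x 15 + x 24 = 2 ∧ x 7 + x 16 + x 25 = 106 ∧ x 8 + x 17 + x 26 = 2 ∧
      x 0 + x 3 + x 6 = 1 ∧ x 1 + x 4 + x 7 = 52 ∧ x 2 + x 5 + x 8 = 2 ∧
      x 9 + x 12 + x 15 = 52 ∧ x 10 + x 13 + x 16 = 2810 ∧ x 11 + x 14 + x 17 = 106 ∧
      x 18 + x 21 + x 24 = 2 ∧ x 19 + x 22 + x 25 = 106 ∧ x 20 + x 23 + x 26 = 2 ∧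
      x 0 + x 1 + x 2 = 1 ∧ x 3 + x 4 + x 5 = 52 ∧ x 6 + x 7 + x 8 = 2 ∧
      x 9 + x 10 + x 11 = 52 ∧ x 12 + x 13 + x 14 = 2810 ∧ x 15 + x 16 + x 17 = 106 ∧
      x 18 + x 19 + x 20 = 2 ∧ x 21 + x 22 + x 23 = 106 ∧ x 24 + x 25 + x 26 = 2) := by
  have h : M.mulVec x = M.mulVec xp ↔ ∀ i : Fin 27,
      x (lineStart i) + x (lineStart i + lineStep i) + x (lineStart i + lineStep i + lineStep i)
        = xp (lineStart i) + xp (lineStart i + lineStep i)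
          + xp (lineStart i + lineStep i + lineStep i) := by
    simp only [funext_iff, M_mulVec]
  rw [h]
  constructor
  · intro h
    exact ⟨h 0, h 1, h 2, h 3, h 4, h 5, h 6, h 7, h 8, h 9, h 10, h 11, h 12, h 13, h 14, h 15,
      h 16, h 17, h 18, h 19, h 20, h 21, h 22, h 23, h 24, h 25, h 26⟩
  · rintro ⟨r0, r1, r2, r3, r4, r5, r6, r7, r8, r9, r10, r11, r12, r13, r14, r15, r16, r17, r18, r19,
      r20, r21, r22, r23, r24, r25, r26⟩ i
    fin_cases i
    exacts [r0, r1, r2, r3, r4, r5, r6, r7, r8, r9, r10, r11, r12, r13, r14, r15, r16, r17, r18, r19,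
      r20, r21, r22, r23, r24, r25, r26]

/-- The array with line sums prescribed by `x_p` and vanishing last entry whose free coordinates
`x₁, x₃, x₇, x₁₉, x₉, x₂₁, x₂₅` are the entries `e, u, v, w, a, b, c` of `p`. -/
def array (p : ℤ × ℤ × ℤ × ℤ × ℤ × ℤ × ℤ) : Fin 27 → ℤ :=
  let ⟨e, u, v, w, a, b, c⟩ := p
  ![e, 1 - e - u, u,
    1 - e - v, 49 + e + u + v + a, 2 - u - a,
    v, 2 - v - a, a,
    1 - e - w, 49 + e + u + w + b, 2 - u - b,
    49 + e + v + w + c, 2659 - e - u - v - w - a - b - c, 102 + u + a + b,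
    2 - v - c, 102 + v + a + c, 2 - a,
    w, 2 - w - b, b,
    2 - w - c, 102 + w + b + c, 2 - b,
    c, 2 - c, 0]

/-- The admissible values of the free coordinates `(e, u, v, w, a, b, c)`. -/
noncomputable def params : Finset (ℤ × ℤ × ℤ × ℤ × ℤ × ℤ × ℤ) :=
  (Finset.Icc (0 : ℤ) 1 ×ˢ Finset.Icc (0 : ℤ) 1 ×ˢ Finset.Icc (0 : ℤ) 1 ×ˢ Finset.Icc (0 : ℤ) 1 ×ˢ
    Finset.Icc (0 : ℤ) 2 ×ˢ Finset.Icc (0 : ℤ) 2 ×ˢ Finset.Icc (0 : ℤ) 2).filter fun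
    | ⟨e, u, v, w, a, b, c⟩ =>
      (e + u ≤ 1 ∧ e + v ≤ 1 ∧ e + w ≤ 1) ∧
      (u + a ≤ 2 ∧ u + b ≤ 2 ∧ v + a ≤ 2 ∧ v + c ≤ 2 ∧ w + b ≤ 2 ∧ w + c ≤ 2)

lemma card_params : params.card = 122 := by
  decide +kernel

lemma array_injective : Function.Injective array := by
  rintro ⟨e, u, v, w, a, b, c⟩ ⟨e₂, u₂, v₂, w₂, a₂, b₂, c₂⟩ h
  have h0 : e = e₂ := congrFun h 0
  have h2 : u = u₂ := congrFun h 2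
  have h6 : v = v₂ := congrFun h 6
  have h18 : w = w₂ := congrFun h 18
  have h8 : a = a₂ := congrFun h 8
  have h20 : b = b₂ := congrFun h 20
  have h24 : c = c₂ := congrFun h 24
  subst h0 h2 h6 h18 h8 h20 h24
  rfl

lemma solution_set_eq :
    {x : Fin 27 → ℤ | (∀ i, 0 ≤ x i) ∧ M.mulVec x = M.mulVec xp ∧ x 26 = 0 ∧ x 8 ≤ 2 ∧ x 17 ≤ 2 ∧
      x 20 ≤ 2 ∧ x 23 ≤ 2 ∧ x 24 ≤ 2 ∧ x 25 ≤ 2} = Set.image array params := by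
  ext x
  simp only [Set.mem_ofPred_eq, Set.mem_image, Finset.mem_coe, mulVec_eq_iff]
  constructor
  · rintro ⟨hpos,
      ⟨r0, r1, r2, r3, r4, r5, r6, r7, r8, r9, r10, r11, r12, r13, r14, r15, r16, r17, r18, r19,
      r20, r21, r22, r23, r24, r25, r26⟩,
      h26, b8, b17, b20, b23, b24, b25⟩
    have p0 := hpos 0
    have p1 := hpos 1
    have p2 := hpos 2
    have p3 := hpos 3
    have p5 := hpos 5
    have p6 := hpos 6
    have p7 := hpos 7
    have p8 := hpos 8
    have p9 := hpos 9
    have p11 := hpos 11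
    have p15 := hpos 15
    have p17 := hpos 17
    have p18 := hpos 18
    have p19 := hpos 19
    have p20 := hpos 20
    have p21 := hpos 21
    have p23 := hpos 23
    have p24 := hpos 24
    have p25 := hpos 25
    refine ⟨(x 0, x 2, x 6, x 18, x 8, x 20, x 24), ?_, ?_⟩
    · simp only [params, Finset.mem_filter, Finset.mem_product, Finset.mem_Icc]
      omega
    · ext i
      fin_cases i <;> simp [array] <;> omega
  · rintro ⟨⟨e, u, v, w, a, b, c⟩, hp, rfl⟩
    simp only [params, Finset.mem_filter, Finset.mem_product, Finset.mem_Icc] at hp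
    refine ⟨fun i => ?_, ?_, ?_⟩
    · fin_cases i <;> simp [array] <;> omega
    · simp [array]
      omega
    · simp [array]
      omega

/-- The set of nonnegative integer vectors \`x\` with \`M x = M x_p\`, \`x₂₇ = 0\`, and \`x₉, x₁₈, x₂₁, x₂₄, x₂₅, x₂₆ ≤ 2\` (block 222) has exactly 122 elements. -/
theorem block222_solution_count :
    {x : Fin 27 → ℤ | (∀ i, 0 ≤ x i) ∧ M.mulVec x = M.mulVec xp ∧ x 26 = 0 ∧ x 8 ≤ 2 ∧ x 17 ≤ 2 ∧ x 20 ≤ 2 ∧ x 23 ≤ 2 ∧ x 24 ≤ 2 ∧ x 25 ≤ 2}.ncard = 122 := by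
  rw [solution_set_eq, Set.ncard_image_of_injective _ array_injective, Set.ncard_coe_finset,
    card_params]
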